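/- For integers i ≥ 1, j ≥ 0 with i + j = k, the highest-order face basis function φ_{ij} := −∇u_{i+1} × ∇v_{(i+1)(j+1)} on the reference tetrahedron is L²-orthogonal to all vector-valued polynomials of degree at most k−2: for every polynomial map q : ℝ³ → ℝ³ whose components have total degree ≤ k−2 one has ∫_{T̂₃} φ_{ij}(x,y,z) · q(x,y,z) d(x,y,z) = 0. -/

import Mathlib

open MeasureTheory

/-- Jacobi polynomial with parameters `(α, 0)`, via the Rodrigues formula. -/
noncomputable def jacobiP (α : ℝ) (n : ℕ) (x : ℝ) : ℝ :=
  1 / (2 ^ n * (n.factorial : ℝ) * (1 - x) ^ α) *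
    iteratedDeriv n (fun t : ℝ => (1 - t) ^ α * (t ^ 2 - 1) ^ n) x

/-- Integrated Jacobi polynomial `p̂_n^α`. -/
noncomputable def jacobiPhat (α : ℝ) (n : ℕ) (x : ℝ) : ℝ :=
  if n = 0 then 1 else ∫ ξ in (-1 : ℝ)..x, jacobiP α (n - 1) ξ

/-- Partial derivative in the first coordinate. -/
noncomputable def pdx (f : ℝ × ℝ × ℝ → ℝ) (p : ℝ × ℝ × ℝ) : ℝ :=
  deriv (fun x => f (x, p.2.1, p.2.2)) p.1

/-- Partial derivative in the second coordinate. -/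
noncomputable def pdy (f : ℝ × ℝ × ℝ → ℝ) (p : ℝ × ℝ × ℝ) : ℝ :=
  deriv (fun y => f (p.1, y, p.2.2)) p.2.1

/-- Partial derivative in the third coordinate. -/
noncomputable def pdz (f : ℝ × ℝ × ℝ → ℝ) (p : ℝ × ℝ × ℝ) : ℝ :=
  deriv (fun z => f (p.1, p.2.1, z)) p.2.2

/-- Gradient of a scalar field on `ℝ³`. -/
noncomputable def grad3 (f : ℝ × ℝ × ℝ → ℝ) (p : ℝ × ℝ × ℝ) : ℝ × ℝ × ℝ :=
  (pdx f p, pdy f p, pdz f p)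

/-- Cross product on `ℝ³`. -/
noncomputable def cross3 (a b : ℝ × ℝ × ℝ) : ℝ × ℝ × ℝ :=
  (a.2.1 * b.2.2 - a.2.2 * b.2.1, a.2.2 * b.1 - a.1 * b.2.2, a.1 * b.2.1 - a.2.1 * b.1)

/-- Euclidean dot product on `ℝ³`. -/
noncomputable def dot3 (a b : ℝ × ℝ × ℝ) : ℝ :=
  a.1 * b.1 + a.2.1 * b.2.1 + a.2.2 * b.2.2

/-- The scalar field `u_i(x,y,z) = p̂_i^0(x/(1-y-z)) (1-y-z)^i`. -/
noncomputable def uFun (i : ℕ) (p : ℝ × ℝ × ℝ) : ℝ :=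
  jacobiPhat 0 i (p.1 / (1 - p.2.1 - p.2.2)) * (1 - p.2.1 - p.2.2) ^ i

/-- The scalar field `v_{ij}(x,y,z) = p̂_j^{2i-1}((2y+z-1)/(1-z)) (1-z)^j`. -/
noncomputable def vFun (i j : ℕ) (p : ℝ × ℝ × ℝ) : ℝ :=
  jacobiPhat (2 * (i : ℝ) - 1) j ((2 * p.2.1 + p.2.2 - 1) / (1 - p.2.2)) * (1 - p.2.2) ^ j

/-- The face basis function `φ_{ij} = -∇u_{i+1} × ∇v_{(i+1)(j+1)}` (for `i ≥ 1`). -/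
noncomputable def phiFace (i j : ℕ) (p : ℝ × ℝ × ℝ) : ℝ × ℝ × ℝ :=
  -cross3 (grad3 (uFun (i + 1)) p) (grad3 (vFun (i + 1) (j + 1)) p)

/-- The reference tetrahedron, the convex hull of
`(-1,0,0)`, `(1,0,0)`, `(0,1,0)`, `(0,0,1)`. -/
def refTet : Set (ℝ × ℝ × ℝ) :=
  {p | 0 ≤ p.2.2 ∧ p.2.2 ≤ 1 ∧ 0 ≤ p.2.1 ∧ p.2.1 ≤ 1 - p.2.2 ∧ |p.1| ≤ 1 - p.2.1 - p.2.2}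


open Polynomial in
theorem aux_antideriv (P : ℝ[X]) : ∃ H : ℝ[X], derivative H = P ∧ H.eval (-1) = 0 := by
  have h : ∃ H : ℝ[X], derivative H = P := by
    induction P using Polynomial.induction_on' with
    | add p q hp hq =>
      obtain ⟨a, rfl⟩ := hp
      obtain ⟨b, rfl⟩ := hq
      exact ⟨a + b, by simp⟩
    | monomial n a =>
      refine ⟨monomial (n+1) (a / (n+1)), ?_⟩
      rw [derivative_monomial]
      have : (n:ℝ) + 1 ≠ 0 := by positivity
      simp
      field_simp
  obtain ⟨H, rfl⟩ := h
  exact ⟨H - C (H.eval (-1)), by simp, by simp⟩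

/-- The functional integrating a polynomial over `[-1,1]`. -/
noncomputable def Lint (p : Polynomial ℝ) : ℝ := ∫ x in (-1:ℝ)..1, p.eval x

theorem Lint_ii (p : Polynomial ℝ) (a b : ℝ) :
    IntervalIntegrable (fun x => p.eval x) volume a b :=
  (Polynomial.continuous p).intervalIntegrable _ _

theorem Lint_add (p q : Polynomial ℝ) : Lint (p + q) = Lint p + Lint q := by
  unfold Lint
  rw [← intervalIntegral.integral_add (Lint_ii p _ _) (Lint_ii q _ _)]
  simp

theorem Lint_sub (p q : Polynomial ℝ) : Lint (p - q) = Lint p - Lint q := by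
  unfold Lint
  rw [← intervalIntegral.integral_sub (Lint_ii p _ _) (Lint_ii q _ _)]
  simp

theorem Lint_C (c : ℝ) (p : Polynomial ℝ) : Lint (Polynomial.C c * p) = c * Lint p := by
  unfold Lint
  rw [← intervalIntegral.integral_const_mul]
  simp

theorem Lint_derivative (p : Polynomial ℝ) :
    Lint (Polynomial.derivative p) = p.eval 1 - p.eval (-1) := by
  unfold Lint
  exact intervalIntegral.integral_eq_sub_of_hasDerivAt (fun x _ => p.hasDerivAt x) (Lint_ii _ _ _)

open Polynomial in
/-- iterated integration by parts -/
theorem Lint_iter (n : ℕ) (W : ℝ[X]) : ∀ (k : ℕ) (r : ℝ[X]), k ≤ n →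
    (X - C 1) ^ n ∣ W → (X - C (-1)) ^ n ∣ W → r.degree < k →
    Lint (derivative^[k] W * r) = 0 := by
  intro k
  induction k with
  | zero =>
    intro r _ _ _ h
    have : r = 0 := by
      rw [← Polynomial.degree_eq_bot]
      exact Nat.WithBot.lt_zero_iff.mp (by simpa using h)
    simp [this, Lint]
  | succ k ih =>
    intro r hk h1 h2 hr
    have hD : derivative (derivative^[k] W * r)
        = derivative^[k+1] W * r + derivative^[k] W * derivative r := by
      rw [derivative_mul, Function.iterate_succ_apply']
    have e := Lint_derivative (derivative^[k] W * r)
    rw [hD, Lint_add, ih (derivative r) (by omega) h1 h2] at e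
    · have z : ∀ c : ℝ, (X - C c) ^ n ∣ W → (derivative^[k] W).eval c = 0 := by
        intro c hc
        have := pow_sub_dvd_iterate_derivative_of_pow_dvd k hc
        have h3 : (X - C c) ∣ derivative^[k] W := (dvd_pow_self _ (by omega)).trans this
        exact dvd_iff_isRoot.mp h3
      rw [add_zero] at e
      rw [e, eval_mul, eval_mul, z 1 h1, z (-1) h2]; simp
    · rcases eq_or_ne r 0 with h | h
      · simp [h]
      · have := degree_derivative_lt h
        have h4 : r.degree < ((k+1 : ℕ) : WithBot ℕ) := hr
        have h5 : r.natDegree < k + 1 := (natDegree_lt_iff_degree_lt h).mpr h4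
        rcases eq_or_ne (derivative r) 0 with h' | h'
        · simp [h']
        · have h6 := (natDegree_lt_natDegree_iff h').mpr this
          exact (natDegree_lt_iff_degree_lt h').mp (by omega)

open Polynomial in
theorem jacobi_poly (m n : ℕ) : ∃ P : ℝ[X], (∀ x : ℝ, x < 1 → jacobiP (m:ℝ) n x = P.eval x) ∧
    ∀ e, m ≤ e → e < m + n → Lint (P * (1 - X) ^ e) = 0 := by
  set W : ℝ[X] := (1 - X) ^ m * (X ^ 2 - 1) ^ n with hW
  have f1 : (X - C (1:ℝ)) ^ (m + n) ∣ W := by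
    rw [hW, pow_add]
    refine mul_dvd_mul (pow_dvd_pow_of_dvd ?_ _) (pow_dvd_pow_of_dvd ?_ _)
    · exact ⟨-1, by simp⟩
    · exact ⟨X + 1, by simp; ring⟩
  have f2 : (X - C (-1:ℝ)) ^ n ∣ W := by
    refine Dvd.dvd.mul_left (pow_dvd_pow_of_dvd ?_ _) _
    exact ⟨X - 1, by simp; ring⟩
  obtain ⟨Q, hQ⟩ := pow_sub_dvd_iterate_derivative_of_pow_dvd n f1
  have hQ' : derivative^[n] W = (1 - X) ^ m * (C ((-1) ^ m) * Q) := by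
    rw [hQ, Nat.add_sub_cancel]
    have : (X - C (1:ℝ)) = C (-1) * (1 - X) := by simp
    rw [this, mul_pow, ← C_pow]; ring
  set R := C ((-1:ℝ) ^ m) * Q
  have hc : (2:ℝ) ^ n * (n.factorial : ℝ) ≠ 0 := by positivity
  refine ⟨C (1 / (2 ^ n * (n.factorial : ℝ))) * R, ?_, ?_⟩
  · intro x hx
    have hfun : (fun t : ℝ => (1 - t) ^ (m:ℝ) * (t ^ 2 - 1) ^ n) = fun t => W.eval t := by
      funext t
      simp [hW, Real.rpow_natCast]
    have hit : ∀ (k : ℕ) (V : ℝ[X]), iteratedDeriv k (fun t => V.eval t)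
        = fun t => (derivative^[k] V).eval t := by
      intro k
      induction k with
      | zero => intro V; simp
      | succ k ih =>
        intro V
        rw [iteratedDeriv_succ, ih, Function.iterate_succ_apply']
        funext t
        simp
    unfold jacobiP
    rw [hfun, hit, hQ']
    have : (1 - x) ^ m ≠ 0 := pow_ne_zero _ (by linarith)
    simp only [eval_mul, eval_pow, eval_sub, eval_one, eval_X, eval_C, Real.rpow_natCast]
    field_simp
  · intro e he he'
    obtain ⟨d, rfl⟩ := Nat.exists_eq_add_of_le he
    have := Lint_iter n W n ((1 - X) ^ d) le_rfl ((pow_dvd_pow _ (by omega)).trans f1) f2 ?_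
    · rw [hQ'] at this
      rw [mul_assoc, Lint_C, ← mul_zero (1 / (2 ^ n * (n.factorial : ℝ))), ← this]
      congr 2
      rw [pow_add]; ring
    · have h1 : ((1 - X : ℝ[X]) ^ d).natDegree ≤ d := by
        refine natDegree_pow_le_of_le d (m := 1) ?_ |>.trans (by simp)
        compute_degree
      exact lt_of_le_of_lt (degree_le_of_natDegree_le h1) (by exact_mod_cast (by omega : d < n))

open Polynomial in
theorem Lint_hat (m n : ℕ) (P H : ℝ[X]) (hH : derivative H = P) (h0 : H.eval (-1) = 0)
    (hP : ∀ e, m ≤ e → e < m + n → Lint (P * (1 - X) ^ e) = 0) (e : ℕ) (h1 : m ≤ e + 1)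
    (h2 : e + 1 < m + n) : Lint (H * (1 - X) ^ e) = 0 := by
  have hD : derivative (H * (1 - X) ^ (e+1)) = P * (1 - X) ^ (e+1)
      - C ((e:ℝ) + 1) * (H * (1 - X) ^ e) := by
    rw [derivative_mul, hH, derivative_pow]
    simp
    ring
  have := Lint_derivative (H * (1 - X) ^ (e+1))
  rw [hD, Lint_sub, Lint_C, hP _ h1 h2] at this
  simp [h0] at this
  rcases this with h | h
  · exact absurd h (by positivity)
  · exact h

open Polynomial in
theorem Lint_shift (A : ℝ[X]) (c : ℝ) (e0 e1 : ℕ)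
    (h : ∀ e, e0 ≤ e → e ≤ e1 → Lint (A * (1 - X) ^ e) = 0) (m : ℕ) :
    ∀ e, e0 ≤ e → e + m ≤ e1 → Lint (A * (1 - X) ^ e * (C c - (1 - X)) ^ m) = 0 := by
  induction m with
  | zero => intro e h0 h1; simpa using h e h0 (by omega)
  | succ m ih =>
    intro e h0 h1
    have : A * (1 - X) ^ e * (C c - (1 - X)) ^ (m+1)
      = C c * (A * (1 - X) ^ e * (C c - (1 - X)) ^ m)
        - A * (1 - X) ^ (e + 1) * (C c - (1 - X)) ^ m := by ring
    rw [this, Lint_sub, Lint_C, ih e h0 (by omega), ih (e+1) (by omega) (by omega)]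
    simp

theorem refTet_closed : IsClosed refTet := by
  have : refTet = {p : ℝ × ℝ × ℝ | 0 ≤ p.2.2} ∩ ({p | p.2.2 ≤ 1} ∩ ({p | 0 ≤ p.2.1} ∩
      ({p | p.2.1 ≤ 1 - p.2.2} ∩ {p | |p.1| ≤ 1 - p.2.1 - p.2.2}))) := by
    ext p; simp [refTet]
  rw [this]
  refine (isClosed_le (by fun_prop) (by fun_prop)).inter <|
    (isClosed_le (by fun_prop) (by fun_prop)).inter <|
    (isClosed_le (by fun_prop) (by fun_prop)).inter <|
    (isClosed_le (by fun_prop) (by fun_prop)).inter <|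
    (isClosed_le (by fun_prop) (by fun_prop))

theorem refTet_finite : volume refTet < ⊤ := by
  have hs : refTet ⊆ Set.Icc ((-1:ℝ), (0:ℝ), (0:ℝ)) ((1:ℝ), (1:ℝ), (1:ℝ)) := by
    rintro ⟨x, y, z⟩ ⟨h1, h2, h3, h4, h5⟩
    simp only at h1 h2 h3 h4 h5
    have := abs_le.mp h5
    refine ⟨⟨?_, ?_, ?_⟩, ⟨?_, ?_, ?_⟩⟩ <;> simp only <;> linarith
  exact lt_of_le_of_lt (measure_mono hs) isCompact_Icc.measure_lt_top

/-- Separated model integrand. -/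
noncomputable def Fmon (A B : Polynomial ℝ) (a b n : ℕ) (p : ℝ × ℝ × ℝ) : ℝ :=
  (1 - p.2.1 - p.2.2) ^ a * A.eval (p.1 / (1 - p.2.1 - p.2.2)) *
    ((1 - p.2.2) ^ b * B.eval ((2 * p.2.1 + p.2.2 - 1) / (1 - p.2.2))) * p.2.2 ^ n

theorem poly_bdd (A : Polynomial ℝ) : ∃ M, 0 ≤ M ∧ ∀ t, |t| ≤ 1 → |A.eval t| ≤ M := by
  obtain ⟨M, hM⟩ := (isCompact_Icc (a := (-1:ℝ)) (b := 1)).exists_bound_of_continuousOn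
    (Polynomial.continuous A).continuousOn
  refine ⟨max M 0, le_max_right _ _, fun t ht => le_max_of_le_left (hM t (abs_le.mp ht))⟩

theorem Fmon_integrable (A B : Polynomial ℝ) (a b n : ℕ) :
    IntegrableOn (Fmon A B a b n) refTet := by
  obtain ⟨M, hM0, hM⟩ := poly_bdd A
  obtain ⟨N, hN0, hN⟩ := poly_bdd B
  refine Measure.integrableOn_of_bounded (M := M * N) refTet_finite.ne ?_ ?_
  · have hA := (Polynomial.continuous A).measurable
    have hB := (Polynomial.continuous B).measurable
    apply Measurable.aestronglyMeasurable
    unfold Fmon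
    have h1 := hA.comp (g := fun t => A.eval t) (f := fun p : ℝ × ℝ × ℝ => p.1 / (1 - p.2.1 - p.2.2))
      (by fun_prop)
    have h2 := hB.comp (g := fun t => B.eval t)
      (f := fun p : ℝ × ℝ × ℝ => (2 * p.2.1 + p.2.2 - 1) / (1 - p.2.2)) (by fun_prop)
    simp only [Function.comp_def] at h1 h2
    fun_prop
  · refine (ae_restrict_iff' refTet_closed.measurableSet).mpr (Filter.Eventually.of_forall ?_)
    rintro ⟨x, y, z⟩ ⟨h1, h2, h3, h4, h5⟩
    simp only at h1 h2 h3 h4 h5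
    have ht : |x / (1 - y - z)| ≤ 1 := by
      rw [abs_div]
      exact div_le_one_of_le₀ (h5.trans (le_abs_self _)) (abs_nonneg _)
    have he : |(2 * y + z - 1) / (1 - z)| ≤ 1 := by
      rw [abs_div]
      refine div_le_one_of_le₀ (le_trans ?_ (le_abs_self _)) (abs_nonneg _)
      rw [abs_le]; constructor <;> linarith
    have k1 : |(1 - y - z) ^ a| ≤ 1 := by
      rw [abs_pow]; refine pow_le_one₀ (abs_nonneg _) ?_
      rw [abs_le]; constructor <;> linarith
    have k2 : |(1 - z) ^ b| ≤ 1 := by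
      rw [abs_pow]; refine pow_le_one₀ (abs_nonneg _) ?_
      rw [abs_le]; constructor <;> linarith
    have k3 : |z ^ n| ≤ 1 := by
      rw [abs_pow]; refine pow_le_one₀ (abs_nonneg _) ?_
      rw [abs_le]; constructor <;> linarith
    have hA := hM _ ht
    have hB := hN _ he
    simp only [Fmon, Real.norm_eq_abs, abs_mul]
    calc _ ≤ 1 * M * (1 * N) * 1 := by gcongr
      _ = M * N := by ring

open Polynomial in
theorem Fmon_int (A B : ℝ[X]) (a b n : ℕ)
    (h : Lint A = 0 ∨ Lint (B * (1 - X) ^ (a + 1)) = 0) :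
    ∫ p in refTet, Fmon A B a b n p = 0 := by
  have hI : Integrable (refTet.indicator (Fmon A B a b n)) :=
    (integrable_indicator_iff refTet_closed.measurableSet).mpr (Fmon_integrable A B a b n)
  rw [← integral_indicator refTet_closed.measurableSet]
  have hI' : Integrable (refTet.indicator (Fmon A B a b n))
    ((volume : Measure ℝ).prod (volume : Measure (ℝ × ℝ))) := hI
  have hG := hI'.integral_prod_right
  have e1 := integral_prod_symm _ hI'
  change ∫ p, _ ∂((volume : Measure ℝ).prod (volume : Measure (ℝ × ℝ))) = 0
  rw [e1]
  have hGv : ∀ q : ℝ × ℝ, (∫ x, refTet.indicator (Fmon A B a b n) (x, q)) =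
      if (0 ≤ q.2 ∧ q.2 ≤ 1 ∧ 0 ≤ q.1 ∧ q.1 ≤ 1 - q.2) then
        (1 - q.1 - q.2) ^ (a + 1) * ((1 - q.2) ^ b * B.eval ((2 * q.1 + q.2 - 1) / (1 - q.2)))
          * q.2 ^ n * Lint A else 0 := by
    rintro ⟨y, z⟩
    simp only
    split_ifs with hc
    · obtain ⟨c1, c2, c3, c4⟩ := hc
      have hs : 0 ≤ 1 - y - z := by linarith
      have : (fun x => refTet.indicator (Fmon A B a b n) (x, y, z)) =
          (Set.Icc (-(1 - y - z)) (1 - y - z)).indicator (fun x => Fmon A B a b n (x, y, z)) := by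
        funext x
        by_cases hx : x ∈ Set.Icc (-(1 - y - z)) (1 - y - z)
        · rw [Set.indicator_of_mem hx, Set.indicator_of_mem]
          exact ⟨c1, c2, c3, c4, abs_le.mpr hx⟩
        · rw [Set.indicator_of_notMem hx, Set.indicator_of_notMem]
          exact fun hh => hx (abs_le.mp hh.2.2.2.2)
      rw [this, integral_indicator measurableSet_Icc, integral_Icc_eq_integral_Ioc,
        ← intervalIntegral.integral_of_le (by linarith)]
      simp only [Fmon]
      rw [intervalIntegral.integral_mul_const, intervalIntegral.integral_mul_const,
        intervalIntegral.integral_const_mul]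
      rcases hs.eq_or_lt with h0 | h0
      · rw [← h0]; simp
      · rw [intervalIntegral.integral_comp_div (fun t => A.eval t) h0.ne', neg_div,
          div_self h0.ne']
        simp only [Lint, smul_eq_mul]
        ring
    · have : (fun x => refTet.indicator (Fmon A B a b n) (x, y, z)) = fun _ => 0 := by
        funext x
        rw [Set.indicator_of_notMem]
        exact fun hh => hc ⟨hh.1, hh.2.1, hh.2.2.1, hh.2.2.2.1⟩
      rw [this]; simp
  rcases h with h | h
  · simp only [hGv, h]; simp
  · change ∫ p, _ ∂((volume : Measure ℝ).prod (volume : Measure ℝ)) = 0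
    rw [integral_prod_symm _ hG]
    refine integral_eq_zero_of_ae (Filter.Eventually.of_forall fun z => ?_)
    simp only [hGv, Pi.zero_apply]
    by_cases hz : 0 ≤ z ∧ z ≤ 1
    · obtain ⟨z0, z1⟩ := hz
      have : (fun y : ℝ => if (0 ≤ z ∧ z ≤ 1 ∧ 0 ≤ y ∧ y ≤ 1 - z) then
        (1 - y - z) ^ (a + 1) * ((1 - z) ^ b * B.eval ((2 * y + z - 1) / (1 - z)))
          * z ^ n * Lint A else 0) = (Set.Icc 0 (1 - z)).indicator (fun y =>
        (1 - y - z) ^ (a + 1) * ((1 - z) ^ b * B.eval ((2 * y + z - 1) / (1 - z)))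
          * z ^ n * Lint A) := by
        funext y
        simp [Set.indicator_apply, z0, z1]
      rw [this, integral_indicator measurableSet_Icc, integral_Icc_eq_integral_Ioc,
        ← intervalIntegral.integral_of_le (by linarith)]
      rcases z1.eq_or_lt with h0 | h0
      · rw [h0]; simp
      · have hw : 1 - z ≠ 0 := by linarith
        have hc : 2 / (1 - z) ≠ 0 := by positivity
        have key : (fun y : ℝ => (1 - y - z) ^ (a + 1) * ((1 - z) ^ b *
            B.eval ((2 * y + z - 1) / (1 - z))) * z ^ n * Lint A) = fun y =>
            ((1 - z) / 2) ^ (a + 1) * (1 - z) ^ b * z ^ n * Lint A *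
              (B * (1 - X) ^ (a + 1)).eval (2 / (1 - z) * y - 1) := by
          funext y
          have e : (2 * y + z - 1) / (1 - z) = 2 / (1 - z) * y - 1 := by
            field_simp; ring
          have e2 : 1 - y - z = (1 - z) / 2 * (1 - (2 / (1 - z) * y - 1)) := by
            field_simp; ring
          rw [e, eval_mul, eval_pow, eval_sub, eval_one, eval_X]
          nth_rewrite 1 [e2]
          rw [mul_pow]; ring
        have e4 := intervalIntegral.integral_comp_mul_sub (a := 0) (b := 1 - z)
            (fun t => (B * (1 - X) ^ (a + 1)).eval t) hc 1
        rw [key, intervalIntegral.integral_const_mul, e4]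
        have e3 : 2 / (1 - z) * (1 - z) - 1 = 1 := by field_simp; norm_num
        rw [e3, mul_zero, zero_sub]
        change _ * (_ • Lint (B * (1 - X) ^ (a + 1))) = 0
        rw [h]; simp
    · have : (fun y : ℝ => if (0 ≤ z ∧ z ≤ 1 ∧ 0 ≤ y ∧ y ≤ 1 - z) then
        (1 - y - z) ^ (a + 1) * ((1 - z) ^ b * B.eval ((2 * y + z - 1) / (1 - z)))
          * z ^ n * Lint A else 0) = fun _ => 0 := by
        funext y
        rw [if_neg]
        exact fun hh => hz ⟨hh.1, hh.2.1⟩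
      rw [this]; simp

theorem good_ae : ∀ᵐ p ∂(volume.restrict refTet), p ∈ refTet ∧ p.1 < 1 - p.2.1 - p.2.2 := by
  have hn : ∀ᵐ p : ℝ × ℝ × ℝ, p.1 ≠ 1 - p.2.1 - p.2.2 := by
    have hm : MeasurableSet {p : ℝ × ℝ × ℝ | p.1 = 1 - p.2.1 - p.2.2} :=
      (isClosed_eq (by fun_prop) (by fun_prop)).measurableSet
    have h0 : volume {p : ℝ × ℝ × ℝ | p.1 = 1 - p.2.1 - p.2.2} = 0 := by
      change ((volume : Measure ℝ).prod (volume : Measure (ℝ × ℝ))) _ = 0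
      rw [Measure.measure_prod_null hm]
      refine Filter.Eventually.of_forall fun x => ?_
      change ((volume : Measure ℝ).prod (volume : Measure ℝ)) _ = 0
      rw [Measure.measure_prod_null (hm.preimage (by fun_prop))]
      refine Filter.Eventually.of_forall fun y => ?_
      refine measure_mono_null (t := {1 - y - x}) ?_ (by simp)
      intro z hz
      have hz' : x = 1 - y - z := hz
      simp only [Set.mem_singleton_iff]
      linarith
    rw [ae_iff]
    simpa using h0
  filter_upwards [ae_restrict_of_ae hn, ae_restrict_mem refTet_closed.measurableSet] with p h1 h2
  exact ⟨h2, lt_of_le_of_ne ((le_abs_self _).trans h2.2.2.2.2) h1⟩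

open Polynomial in
theorem hat_eval (α : ℝ) (n : ℕ) (P H : ℝ[X]) (hP : ∀ x : ℝ, x < 1 → jacobiP α n x = P.eval x)
    (hH : derivative H = P) (h0 : H.eval (-1) = 0) (x : ℝ) (hx : x < 1) :
    jacobiPhat α (n + 1) x = H.eval x := by
  unfold jacobiPhat
  rw [if_neg (by omega), Nat.add_sub_cancel]
  have : ∫ ξ in (-1:ℝ)..x, jacobiP α n ξ = ∫ ξ in (-1:ℝ)..x, P.eval ξ := by
    refine intervalIntegral.integral_congr fun ξ hξ => hP ξ ?_
    rcases Set.mem_uIcc.mp hξ with h | h <;> linarith [h.1, h.2]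
  rw [this, intervalIntegral.integral_eq_sub_of_hasDerivAt (f := fun x => H.eval x)
    (fun y _ => by simpa [hH] using H.hasDerivAt y) (Lint_ii _ _ _), h0, sub_zero]

open Polynomial in
theorem grad_u (i : ℕ) (P H : ℝ[X]) (hH : derivative H = P)
    (he : ∀ x : ℝ, x < 1 → jacobiPhat 0 (i + 1) x = H.eval x)
    (x y z : ℝ) (hs : 0 < 1 - y - z) (hx : x < 1 - y - z) :
    grad3 (uFun (i + 1)) (x, y, z) =
      ((1 - y - z) ^ i * P.eval (x / (1 - y - z)),
       -((1 - y - z) ^ i * (C ((i:ℝ) + 1) * H - X * P).eval (x / (1 - y - z))),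
       -((1 - y - z) ^ i * (C ((i:ℝ) + 1) * H - X * P).eval (x / (1 - y - z)))) := by
  have hu : ∀ x y z : ℝ, 0 < 1 - y - z → x < 1 - y - z →
      uFun (i + 1) (x, y, z) = H.eval (x / (1 - y - z)) * (1 - y - z) ^ (i + 1) := by
    intro x y z h1 h2
    simp only [uFun]
    rw [he _ ((div_lt_one h1).mpr h2)]
  have hs' : 1 - y - z ≠ 0 := hs.ne'
  have hHd : ∀ t, HasDerivAt (fun t => H.eval t) (P.eval t) t := fun t => by
    simpa [hH] using H.hasDerivAt t
  have aux : ∀ (g : ℝ → ℝ) (c : ℝ), HasDerivAt g (-1) c → g c = 1 - y - z →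
      HasDerivAt (fun t => H.eval (x / g t) * (g t) ^ (i + 1))
       (-((1 - y - z) ^ i * (C ((i:ℝ) + 1) * H - X * P).eval (x / (1 - y - z)))) c := by
    intro g c hg hgc
    have h1 : HasDerivAt (fun t => x / g t) (x / (1 - y - z) ^ 2) c := by
      have := (hasDerivAt_const c x).div hg (by rw [hgc]; exact hs')
      refine this.congr_deriv ?_
      rw [hgc]; ring
    have h2 := (hHd (x / g c)).comp c h1
    have h3 := h2.mul (hg.pow (i + 1))
    refine h3.congr_deriv ?_
    simp only [Function.comp_def, hgc, Pi.pow_apply, eval_sub, eval_mul, eval_C, eval_X]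
    push_cast
    field_simp
    ring
  unfold grad3 pdx pdy pdz
  simp only [Prod.mk.injEq]
  refine ⟨?_, ?_, ?_⟩
  · have ev : (fun x' => uFun (i + 1) (x', y, z)) =ᶠ[nhds x]
        fun x' => H.eval (x' / (1 - y - z)) * (1 - y - z) ^ (i + 1) := by
      filter_upwards [isOpen_Iio.mem_nhds (show x ∈ Set.Iio (1 - y - z) from hx)] with x' hx'
      exact hu x' y z hs hx'
    rw [ev.deriv_eq]
    have h1 := (((hHd (x / (1 - y - z))).comp x
      ((hasDerivAt_id x).div_const (1 - y - z))).mul_const ((1 - y - z) ^ (i + 1))).deriv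
    simp only [Function.comp_def, id] at h1
    rw [h1]
    field_simp
    ring
  · have ev : (fun y' => uFun (i + 1) (x, y', z)) =ᶠ[nhds y]
        fun y' => H.eval (x / (1 - y' - z)) * (1 - y' - z) ^ (i + 1) := by
      have c1 : Continuous fun y' : ℝ => 1 - y' - z := by fun_prop
      filter_upwards [c1.continuousAt.eventually_const_lt hs,
        c1.continuousAt.eventually_const_lt hx] with y' h1 h2
      exact hu x y' z h1 h2
    rw [ev.deriv_eq]
    exact (aux (fun y' => 1 - y' - z) y (((hasDerivAt_id y).const_sub 1).sub_const z) rfl).deriv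
  · have ev : (fun z' => uFun (i + 1) (x, y, z')) =ᶠ[nhds z]
        fun z' => H.eval (x / (1 - y - z')) * (1 - y - z') ^ (i + 1) := by
      have c1 : Continuous fun z' : ℝ => 1 - y - z' := by fun_prop
      filter_upwards [c1.continuousAt.eventually_const_lt hs,
        c1.continuousAt.eventually_const_lt hx] with z' h1 h2
      exact hu x y z' h1 h2
    rw [ev.deriv_eq]
    exact (aux (fun z' => 1 - y - z') z ((hasDerivAt_id z).const_sub (1 - y)) rfl).deriv

open Polynomial in
theorem grad_v (i j : ℕ) (P H : ℝ[X]) (hH : derivative H = P)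
    (he : ∀ x : ℝ, x < 1 → jacobiPhat (2 * (i : ℝ) - 1) (j + 1) x = H.eval x)
    (x y z : ℝ) (hs : 0 < 1 - y - z) (hw : 0 < 1 - z) :
    grad3 (vFun i (j + 1)) (x, y, z) =
      (0, (1 - z) ^ j * (2 * P.eval ((2 * y + z - 1) / (1 - z))),
       (1 - z) ^ j * ((1 + X) * P - C ((j:ℝ) + 1) * H).eval ((2 * y + z - 1) / (1 - z))) := by
  have hv : ∀ x y z : ℝ, 0 < 1 - y - z → 0 < 1 - z →
      vFun i (j + 1) (x, y, z) = H.eval ((2 * y + z - 1) / (1 - z)) * (1 - z) ^ (j + 1) := by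
    intro x y z h1 h2
    simp only [vFun]
    rw [he _ ((div_lt_one h2).mpr (by linarith))]
  have hw' : 1 - z ≠ 0 := hw.ne'
  have hHd : ∀ t, HasDerivAt (fun t => H.eval t) (P.eval t) t := fun t => by
    simpa [hH] using H.hasDerivAt t
  unfold grad3 pdx pdy pdz
  simp only [Prod.mk.injEq]
  refine ⟨?_, ?_, ?_⟩
  · simp [vFun]
  · have ev : (fun y' => vFun i (j + 1) (x, y', z)) =ᶠ[nhds y]
        fun y' => H.eval ((2 * y' + z - 1) / (1 - z)) * (1 - z) ^ (j + 1) := by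
      have c1 : Continuous fun y' : ℝ => 1 - y' - z := by fun_prop
      filter_upwards [c1.continuousAt.eventually_const_lt hs] with y' h1
      exact hv x y' z h1 hw
    rw [ev.deriv_eq]
    have h1 : HasDerivAt (fun y' : ℝ => (2 * y' + z - 1) / (1 - z)) (2 * 1 / (1 - z)) y :=
      ((((hasDerivAt_id y).const_mul 2).add_const z).sub_const 1).div_const (1 - z)
    have h2 := (((hHd ((2 * y + z - 1) / (1 - z))).comp y h1).mul_const
      ((1 - z) ^ (j + 1))).deriv
    simp only [Function.comp_def] at h2
    rw [h2]
    field_simp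
    ring
  · have ev : (fun z' => vFun i (j + 1) (x, y, z')) =ᶠ[nhds z]
        fun z' => H.eval ((2 * y + z' - 1) / (1 - z')) * (1 - z') ^ (j + 1) := by
      have c1 : Continuous fun z' : ℝ => 1 - y - z' := by fun_prop
      have c2 : Continuous fun z' : ℝ => 1 - z' := by fun_prop
      filter_upwards [c1.continuousAt.eventually_const_lt hs,
        c2.continuousAt.eventually_const_lt hw] with z' h1 h2
      exact hv x y z' h1 h2
    rw [ev.deriv_eq]
    have g1 : HasDerivAt (fun z' : ℝ => 1 - z') (-1) z := (hasDerivAt_id z).const_sub 1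
    have g2 : HasDerivAt (fun z' : ℝ => 2 * y + z' - 1) 1 z :=
      ((hasDerivAt_id z).const_add (2 * y)).sub_const 1
    have h2 := (hHd ((2 * y + z - 1) / (1 - z))).comp z (g2.div g1 hw')
    have h3 := (h2.mul (g1.pow (j + 1))).deriv
    refine (Eq.trans ?_ h3).trans ?_
    · rfl
    · simp only [Function.comp_def, Pi.pow_apply, eval_sub, eval_mul, eval_C, eval_X, eval_add,
        eval_one, Pi.div_apply]
      push_cast
      field_simp
      ring

open Polynomial in
theorem comp_int (A B : ℝ[X]) (i j : ℕ) (N : ℤ) (q : MvPolynomial (Fin 3) ℝ)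
    (hq : (q.totalDegree : ℤ) ≤ N)
    (h : ∀ l m : ℕ, ((l + m : ℕ) : ℤ) ≤ N → Lint (A * X ^ l) = 0 ∨
      Lint (B * (1 - X) ^ (i + l + 1) * (C 2 - (1 - X)) ^ m) = 0) :
    IntegrableOn (fun p : ℝ × ℝ × ℝ => Fmon A B i j 0 p *
      MvPolynomial.eval ![p.1, p.2.1, p.2.2] q) refTet ∧
    ∫ p in refTet, Fmon A B i j 0 p * MvPolynomial.eval ![p.1, p.2.1, p.2.2] q = 0 := by
  set S : ℝ × ℝ × ℝ → ℝ := fun p => ∑ d ∈ q.support, (q.coeff d * (1 / 2) ^ (d 1)) *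
    Fmon (A * X ^ (d 0)) (B * (C 2 - (1 - X)) ^ (d 1)) (i + d 0) (j + d 1) (d 2) p with hS
  have hae : (fun p : ℝ × ℝ × ℝ => Fmon A B i j 0 p *
      MvPolynomial.eval ![p.1, p.2.1, p.2.2] q) =ᵐ[volume.restrict refTet] S := by
    filter_upwards [good_ae] with p hp
    obtain ⟨x, y, z⟩ := p
    obtain ⟨⟨h1, h2, h3, h4, h5⟩, h6⟩ := hp
    simp only at h1 h2 h3 h4 h5 h6
    have hs : 0 < 1 - y - z := by linarith [(abs_le.mp h5).1]
    have hw : 0 < 1 - z := by linarith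
    simp only [hS, MvPolynomial.eval_eq', Finset.mul_sum]
    refine Finset.sum_congr rfl fun d _ => ?_
    simp only [Fin.prod_univ_three, Fmon, Matrix.cons_val_zero, Matrix.cons_val_one,
      Matrix.cons_val, eval_mul, eval_pow, eval_sub, eval_one, eval_X, eval_C, pow_add]
    have ex : x ^ (d 0) = (1 - y - z) ^ (d 0) * (x / (1 - y - z)) ^ (d 0) := by
      rw [← mul_pow]; congr 1; field_simp
    have ey : y ^ (d 1) = (1 / 2) ^ (d 1) * ((1 - z) ^ (d 1) *
        (2 - (1 - (2 * y + z - 1) / (1 - z))) ^ (d 1)) := by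
      rw [← mul_pow, ← mul_pow]; congr 1; field_simp; ring
    rw [ex, ey]
    ring
  have hint : ∀ d ∈ q.support, IntegrableOn (fun p => (q.coeff d * (1 / 2) ^ (d 1)) *
    Fmon (A * X ^ (d 0)) (B * (C 2 - (1 - X)) ^ (d 1)) (i + d 0) (j + d 1) (d 2) p) refTet :=
    fun d _ => (Fmon_integrable _ _ _ _ _).const_mul _
  constructor
  · refine Integrable.congr ?_ hae.symm
    exact integrable_finsetSum _ hint
  · rw [integral_congr_ae hae, integral_finsetSum _ hint]
    refine Finset.sum_eq_zero fun d hd => ?_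
    rw [integral_const_mul, Fmon_int, mul_zero]
    have hdeg := MvPolynomial.le_totalDegree hd
    have hsum : d.sum (fun _ e => e) = d 0 + d 1 + d 2 := by
      rw [Finsupp.sum_fintype _ _ (fun _ => rfl), Fin.sum_univ_three]
    have := h (d 0) (d 1) (by
      rw [hsum] at hdeg
      have : d 0 + d 1 ≤ q.totalDegree := by omega
      refine le_trans ?_ hq
      exact_mod_cast this)
    rwa [mul_right_comm B] at this

/-- The highest-order face basis function `φ_{ij}` with `i + j = k`, `i ≥ 1`, is
`L²(T̂₃)`-orthogonal to all vector-valued polynomials of total degree at most `k - 2`. -/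
theorem phiFace_orthogonal_to_low_order (k i j : ℕ) (hi : 1 ≤ i) (hij : i + j = k)
    (q₁ q₂ q₃ : MvPolynomial (Fin 3) ℝ)
    (h₁ : (q₁.totalDegree : ℤ) ≤ (k : ℤ) - 2)
    (h₂ : (q₂.totalDegree : ℤ) ≤ (k : ℤ) - 2)
    (h₃ : (q₃.totalDegree : ℤ) ≤ (k : ℤ) - 2) :
    ∫ p in refTet,
        dot3 (phiFace i j p)
          (MvPolynomial.eval ![p.1, p.2.1, p.2.2] q₁,
           MvPolynomial.eval ![p.1, p.2.1, p.2.2] q₂,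
           MvPolynomial.eval ![p.1, p.2.1, p.2.2] q₃) = 0 := by
  obtain ⟨P1, hP1, hM1⟩ := jacobi_poly 0 i
  obtain ⟨H1, hH1, hz1⟩ := aux_antideriv P1
  obtain ⟨P2, hP2, hM2⟩ := jacobi_poly (2 * i + 1) j
  obtain ⟨H2, hH2, hz2⟩ := aux_antideriv P2
  have hN1 := Lint_hat 0 i P1 H1 hH1 hz1 hM1
  have hN2 := Lint_hat (2 * i + 1) j P2 H2 hH2 hz2 hM2
  have he1 : ∀ x : ℝ, x < 1 → jacobiPhat 0 (i + 1) x = H1.eval x :=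
    hat_eval 0 i P1 H1 (by simpa using hP1) hH1 hz1
  have he2 : ∀ x : ℝ, x < 1 → jacobiPhat (2 * ((i + 1 : ℕ) : ℝ) - 1) (j + 1) x = H2.eval x := by
    have : (2 * ((i + 1 : ℕ) : ℝ) - 1) = ((2 * i + 1 : ℕ) : ℝ) := by push_cast; ring
    rw [this]
    exact hat_eval _ j P2 H2 hP2 hH2 hz2
  set U : Polynomial ℝ := Polynomial.C ((i:ℝ) + 1) * H1 - Polynomial.X * P1 with hU
  set V : Polynomial ℝ := (1 + Polynomial.X) * P2 - Polynomial.C ((j:ℝ) + 1) * H2 with hV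
  -- moment facts
  have mU : ∀ e, e + 1 < i → Lint (U * (1 - Polynomial.X) ^ e) = 0 := by
    intro e he
    have : U * (1 - Polynomial.X) ^ e = Polynomial.C ((i:ℝ) + 1) * (H1 * (1 - Polynomial.X) ^ e)
      - (P1 * (1 - Polynomial.X) ^ e - P1 * (1 - Polynomial.X) ^ (e + 1)) := by
      rw [hU]; ring
    rw [this, Lint_sub, Lint_sub, Lint_C, hN1 e (by omega) (by omega), hM1 e (by omega) (by omega),
      hM1 (e + 1) (by omega) (by omega)]
    simp
  have mV : ∀ e, 2 * i + 1 ≤ e → e + 1 ≤ 2 * i + j →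
      Lint (V * (1 - Polynomial.X) ^ e) = 0 := by
    intro e h0 h1
    have : V * (1 - Polynomial.X) ^ e = Polynomial.C 2 * (P2 * (1 - Polynomial.X) ^ e)
      - P2 * (1 - Polynomial.X) ^ (e + 1)
      - Polynomial.C ((j:ℝ) + 1) * (H2 * (1 - Polynomial.X) ^ e) := by
      rw [hV, show (Polynomial.C (2:ℝ)) = 2 from rfl]; ring
    rw [this, Lint_sub, Lint_sub, Lint_C, Lint_C, hN2 e (by omega) (by omega),
      hM2 e (by omega) (by omega), hM2 (e + 1) (by omega) (by omega)]
    simp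
  have mV' : ∀ e, 2 * i ≤ e → e + 1 ≤ 2 * i + j →
      Lint ((V - Polynomial.C 2 * P2) * (1 - Polynomial.X) ^ e) = 0 := by
    intro e h0 h1
    have : (V - Polynomial.C 2 * P2) * (1 - Polynomial.X) ^ e =
      Polynomial.C (-1) * (P2 * (1 - Polynomial.X) ^ (e + 1))
      - Polynomial.C ((j:ℝ) + 1) * (H2 * (1 - Polynomial.X) ^ e) := by
      rw [hV, show (Polynomial.C (2:ℝ)) = 2 from rfl, Polynomial.C_neg, Polynomial.C_1]; ring
    rw [this, Lint_sub, Lint_C, Lint_C, hN2 e (by omega) (by omega),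
      hM2 (e + 1) (by omega) (by omega)]
    simp
  have hX : ∀ (A : Polynomial ℝ) (l e1 : ℕ), (∀ e, e ≤ e1 →
      Lint (A * (1 - Polynomial.X) ^ e) = 0) → l ≤ e1 → Lint (A * Polynomial.X ^ l) = 0 := by
    intro A l e1 hA hl
    have := Lint_shift A 1 0 e1 (fun e _ h => hA e h) l 0 le_rfl (by omega)
    simpa using this
  have c1 := comp_int U (V - Polynomial.C 2 * P2) i j _ q₁ h₁ (by
    intro l m hlm
    by_cases hl : l + 1 < i
    · exact Or.inl (hX U l l (fun e he => mU e (by omega)) le_rfl)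
    · refine Or.inr (Lint_shift _ 2 (2 * i) (2 * i + j - 1) (fun e a b => mV' e a (by omega)) m
        (i + l + 1) (by omega) (by omega)))
  have hPl : ∀ l, l < i → Lint (P1 * Polynomial.X ^ l) = 0 := fun l hl =>
    hX P1 l l (fun e he => hM1 e (by omega) (by omega)) le_rfl
  have c2 := comp_int P1 V i j _ q₂ h₂ (by
    intro l m hlm
    by_cases hl : l < i
    · exact Or.inl (hPl l hl)
    · exact Or.inr (Lint_shift _ 2 (2 * i + 1) (2 * i + j - 1) (fun e a b => mV e a (by omega)) m
        (i + l + 1) (by omega) (by omega)))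
  have c3 := comp_int P1 P2 i j _ q₃ h₃ (by
    intro l m hlm
    by_cases hl : l < i
    · exact Or.inl (hPl l hl)
    · exact Or.inr (Lint_shift _ 2 (2 * i + 1) (2 * i + j - 1)
        (fun e a b => hM2 e a (by omega)) m (i + l + 1) (by omega) (by omega)))
  have hae : (fun p : ℝ × ℝ × ℝ => dot3 (phiFace i j p)
          (MvPolynomial.eval ![p.1, p.2.1, p.2.2] q₁,
           MvPolynomial.eval ![p.1, p.2.1, p.2.2] q₂,
           MvPolynomial.eval ![p.1, p.2.1, p.2.2] q₃)) =ᵐ[volume.restrict refTet]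
      fun p => Fmon U (V - Polynomial.C 2 * P2) i j 0 p *
          MvPolynomial.eval ![p.1, p.2.1, p.2.2] q₁ +
        Fmon P1 V i j 0 p * MvPolynomial.eval ![p.1, p.2.1, p.2.2] q₂ +
        (-2) * (Fmon P1 P2 i j 0 p * MvPolynomial.eval ![p.1, p.2.1, p.2.2] q₃) := by
    filter_upwards [good_ae] with p hp
    obtain ⟨x, y, z⟩ := p
    obtain ⟨⟨g1, g2, g3, g4, g5⟩, g6⟩ := hp
    simp only at g1 g2 g3 g4 g5 g6
    have hs : 0 < 1 - y - z := by linarith [(abs_le.mp g5).1]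
    have hw : 0 < 1 - z := by linarith
    have gu := grad_u i P1 H1 hH1 he1 x y z hs g6
    have gv := grad_v (i + 1) j P2 H2 hH2 he2 x y z hs hw
    simp only [phiFace]
    rw [gu, gv, ← hU, ← hV]
    simp only [cross3, dot3, Fmon, Prod.fst_neg, Prod.snd_neg, Polynomial.eval_sub,
      Polynomial.eval_mul, Polynomial.eval_C, pow_zero, mul_one]
    ring
  have c3' := c3.1.const_mul (-2)
  have c12 : Integrable (fun p : ℝ × ℝ × ℝ => Fmon U (V - Polynomial.C 2 * P2) i j 0 p *
          MvPolynomial.eval ![p.1, p.2.1, p.2.2] q₁ +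
        Fmon P1 V i j 0 p * MvPolynomial.eval ![p.1, p.2.1, p.2.2] q₂)
      (volume.restrict refTet) := c1.1.add c2.1
  rw [integral_congr_ae hae, integral_add c12 c3', integral_add c1.1 c2.1,
    integral_const_mul, c1.2, c2.2, c3.2]
  simp
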